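/- Let ε > 0 and let ℒu = J*u − u with J ∈ L¹(ℝ), |x|²J ∈ L¹(ℝ), ∫_ℝ J dx = 1, J even and nonnegative. Let u^ε be a bounded classical solution on ℝ×(0,∞) of u_t = ε u_xx + ℒu − u u_x, smooth with all derivatives bounded on ℝ×(t₀,∞) for every t₀ > 0, with initial datum u₀ satisfying: u₀ − u₋ ∈ L¹((−∞,0)), u₀ − u₊ ∈ L¹((0,∞)) for constants u₋ < u₊, u₀ weakly differentiable with u₀′ ∈ L¹(ℝ) and u₀′ ≥ 0 a.e., and suppose u^ε_x ≥ 0 on ℝ×(0,∞), u^ε_x(·,t) ∈ L¹(ℝ) for each t > 0 with ∫_ℝ u^ε_x(x,t) dx = ∫_ℝ u₀′(x) dx. Then for every p ∈ [1,∞] and all t > 0: ‖u^ε_x(·,t)‖_{L^p(ℝ)} ≤ t^{−1+1/p} ‖u₀′‖_{L¹(ℝ)}^{1/p}. -/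

import Mathlib

open MeasureTheory Filter
open scoped ENNReal

/-!
Write `w = u_x`. Where `w(·, t)` attains its maximum, `w_x = 0`, `w_xx ≤ 0` and `ℒw ≤ 0`, so
differentiating the equation in `x` leaves `w_t ≤ -w²`. The maximum over `x` is attained because
`u(·, t)` is monotone and bounded while `w(·, t)` is Lipschitz, which forces `w(·, t) → 0` at
`±∞`. For `a > 0`, look at a point `(x, τ)` maximizing `(t - a) w(x, t)` over `ℝ × [a, b]`: if
`τ > a`, then `0 ≤ ∂ₜ((t - a) w) ≤ w - (τ - a) w²` there, hence `(τ - a) w ≤ 1`. This gives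
`(b - a) w(x, b) ≤ 1`, and `a → 0` gives the case `p = ∞`. The other exponents follow by
interpolation with the `L¹` norm of `w`.
-/

open Set Function Topology
open scoped NNReal

section Maxima

theorem nonneg_of_hasDerivWithinAt_of_isMaxOn_Icc {f : ℝ → ℝ} {D a b : ℝ} (hab : a < b)
    (hmax : IsMaxOn f (Icc a b) b) (hf : HasDerivWithinAt f D (Icc a b) b) : 0 ≤ D := by
  have hcone : a - b ∈ posTangentConeAt (Icc a b) b :=
    sub_mem_posTangentConeAt_of_segment_subset (by rw [segment_symm, segment_eq_Icc hab.le])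
  have hle : (a - b) * D ≤ 0 := by
    simpa using hmax.localize.hasFDerivWithinAt_nonpos hf.hasFDerivWithinAt hcone
  exact nonneg_of_mul_nonpos_right hle (sub_neg.2 hab)

theorem deriv_deriv_nonpos_of_isLocalMax {f : ℝ → ℝ} {x : ℝ} (hmax : IsLocalMax f x)
    (hf : ContinuousAt f x) : deriv (deriv f) x ≤ 0 := by
  by_contra! hpos
  have hmin : IsLocalMin f x := isLocalMin_of_deriv_deriv_pos hpos hmax.deriv_eq_zero hf
  have hconst : f =ᶠ[𝓝 x] fun _ => f x := by
    filter_upwards [hmax, hmin] with y hle hge using le_antisymm hle hge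
  have hzero : deriv (deriv f) x = 0 := by simpa using hconst.deriv.deriv.eq_of_nhds
  exact hpos.ne' hzero

theorem exists_forall_le_of_tendsto_cocompact_zero {X : Type*} [TopologicalSpace X] [Nonempty X]
    {g : X → ℝ} (hg : Continuous g) (hg0 : ∀ x, 0 ≤ g x) (hlim : Tendsto g (cocompact X) (𝓝 0)) :
    ∃ x, ∀ y, g y ≤ g x := by
  by_cases hpos : ∃ x, 0 < g x
  · obtain ⟨x, hx⟩ := hpos
    exact hg.exists_forall_ge' x ((hlim.eventually_lt_const hx).mono fun _ => le_of_lt)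
  · push Not at hpos
    exact ⟨Classical.arbitrary X, fun y => (hpos y).trans (hg0 _)⟩

theorem lipschitzOnWith_of_forall_le {ι α : Type*} [PseudoMetricSpace α] {f : ι → α → ℝ}
    {s : Set α} {K : ℝ≥0} {X : α → ι} (hf : ∀ i, LipschitzOnWith K (f i) s)
    (hX : ∀ t ∈ s, ∀ i, f i t ≤ f (X t) t) : LipschitzOnWith K (fun t => f (X t) t) s :=
  LipschitzOnWith.of_le_add_mul K fun t ht r hr =>
    ((hf (X t)).le_add_mul ht hr).trans (by gcongr; exact hX r hr (X t))

theorem sub_mul_le_one_of_hasDerivAt_le_neg_sq {ι : Type*} {w : ι → ℝ → ℝ} {a b : ℝ} {K : ℝ≥0}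
    (hab : a ≤ b) (hLip : ∀ i, LipschitzOnWith K (w i) (Icc a b))
    (hmax : ∀ t ∈ Icc a b, ∃ i, ∀ j, w j t ≤ w i t)
    (hderiv : ∀ t ∈ Ioc a b, ∀ i, (∀ j, w j t ≤ w i t) → ∃ D ≤ -(w i t) ^ 2, HasDerivAt (w i) D t)
    (i : ι) : (b - a) * w i b ≤ 1 := by
  have : Nonempty ι := ⟨i⟩
  choose! X hX using hmax
  have hcont : ContinuousOn (fun t => (t - a) * w (X t) t) (Icc a b) :=
    (by fun_prop : ContinuousOn (fun t => t - a) _).mul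
      (lipschitzOnWith_of_forall_le hLip hX).continuousOn
  obtain ⟨τ, hτ, hτmax⟩ := isCompact_Icc.exists_isMaxOn (nonempty_Icc.2 hab) hcont
  have hglobal : ∀ t ∈ Icc a b, ∀ j, (t - a) * w j t ≤ (τ - a) * w (X τ) τ := fun t ht j =>
    (mul_le_mul_of_nonneg_left (hX t ht j) (sub_nonneg.2 ht.1)).trans (hτmax ht)
  refine (hglobal b (right_mem_Icc.2 hab) i).trans ?_
  rcases hτ.1.eq_or_lt with rfl | haτ
  · simp
  obtain ⟨D, hD, hwD⟩ := hderiv τ ⟨haτ, hτ.2⟩ (X τ) (hX τ hτ)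
  have hslope : 0 ≤ 1 * w (X τ) τ + (τ - a) * D :=
    nonneg_of_hasDerivWithinAt_of_isMaxOn_Icc haτ
      (fun t ht => hglobal t ⟨ht.1, ht.2.trans hτ.2⟩ (X τ))
      (((hasDerivAt_id τ).sub_const a).mul hwD).hasDerivWithinAt
  have hriccati : (τ - a) * D ≤ (τ - a) * -(w (X τ) τ) ^ 2 :=
    mul_le_mul_of_nonneg_left hD (sub_pos.2 haτ).le
  by_contra! hgt
  have hwpos : 0 < w (X τ) τ := pos_of_mul_pos_right (one_pos.trans hgt) (sub_pos.2 haτ).le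
  nlinarith [mul_lt_mul_of_pos_right hgt hwpos]

end Maxima

section DecayAtInfinity

theorem tendsto_zero_of_hasDerivAt_of_uniformContinuous {E : Type*} [NormedAddCommGroup E]
    [NormedSpace ℝ E] {f f' : ℝ → E} {l : Filter ℝ} (hf : ∀ x, HasDerivAt f (f' x) x)
    (hf' : UniformContinuous f')
    (hl : ∀ δ > 0, Tendsto (fun x => f (x + δ) - f x) l (𝓝 0)) : Tendsto f' l (𝓝 0) := by
  refine Metric.tendsto_nhds.2 fun η hη => ?_
  obtain ⟨δ, hδ, hclose⟩ := Metric.uniformContinuous_iff_le.1 hf' (η / 2) (half_pos hη)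
  have hsmall : ∀ᶠ x in l, dist (f (x + δ) - f x) 0 < η / 2 * δ :=
    Metric.tendsto_nhds.1 (hl δ hδ) _ (by positivity)
  filter_upwards [hsmall] with x hx
  have htaylor : ‖f (x + δ) - (x + δ) • f' x - (f x - x • f' x)‖ ≤ η / 2 * (x + δ - x) := by
    refine norm_image_sub_le_of_norm_deriv_le_segment' (f := fun y => f y - y • f' x)
      (fun y _ => ((hf y).sub ((hasDerivAt_id y).smul_const (f' x))).hasDerivWithinAt)
      (fun y hy => ?_) (x + δ) (right_mem_Icc.2 (by linarith))
    rw [one_smul, ← dist_eq_norm]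
    refine hclose ?_
    rw [Real.dist_eq, abs_of_nonneg (by linarith [hy.1])]
    linarith [hy.2]
  have hsplit : δ • f' x =
      (f (x + δ) - f x) - (f (x + δ) - (x + δ) • f' x - (f x - x • f' x)) := by
    module
  have hnorm : δ * ‖f' x‖ < δ * η := by
    calc δ * ‖f' x‖ = ‖δ • f' x‖ := by rw [norm_smul, Real.norm_of_nonneg hδ.le]
      _ ≤ ‖f (x + δ) - f x‖ + η / 2 * (x + δ - x) := by
        rw [hsplit]; exact (norm_sub_le _ _).trans (by gcongr)
      _ < δ * η := by rw [dist_zero_right] at hx; linarith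
  rw [dist_zero_right]
  exact lt_of_mul_lt_mul_left hnorm hδ.le

theorem tendsto_add_sub_cocompact_of_monotone {f : ℝ → ℝ} (hf : Monotone f)
    (hbelow : BddBelow (range f)) (habove : BddAbove (range f)) (δ : ℝ) :
    Tendsto (fun x => f (x + δ) - f x) (cocompact ℝ) (𝓝 0) := by
  rw [cocompact_eq_atBot_atTop]
  refine .sup ?_ ?_
  · have hlim := tendsto_atBot_ciInf hf hbelow
    simpa using (hlim.comp (tendsto_atBot_add_const_right atBot δ tendsto_id)).sub hlim
  · have hlim := tendsto_atTop_ciSup hf habove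
    simpa using (hlim.comp (tendsto_atTop_add_const_right atTop δ tendsto_id)).sub hlim

theorem exists_forall_deriv_le_of_bounded {f : ℝ → ℝ} {M : ℝ} (hf : Differentiable ℝ f)
    (hf0 : ∀ x, 0 ≤ deriv f x) (hM : ∀ x, |f x| ≤ M) (hunif : UniformContinuous (deriv f)) :
    ∃ x, ∀ y, deriv f y ≤ deriv f x := by
  have hbelow : BddBelow (range f) := ⟨-M, forall_mem_range.2 fun x => (abs_le.1 (hM x)).1⟩
  have habove : BddAbove (range f) := ⟨M, forall_mem_range.2 fun x => (abs_le.1 (hM x)).2⟩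
  have hlim : Tendsto (deriv f) (cocompact ℝ) (𝓝 0) :=
    tendsto_zero_of_hasDerivAt_of_uniformContinuous (fun x => (hf x).hasDerivAt) hunif fun δ _ =>
      tendsto_add_sub_cocompact_of_monotone (monotone_of_deriv_nonneg hf hf0) hbelow habove δ
  exact exists_forall_le_of_tendsto_cocompact_zero hunif.continuous hf0 hlim

end DecayAtInfinity

section PartialDerivatives

theorem lipschitzOnWith_fderiv_of_norm_iteratedFDeriv_two_le {E F : Type*} [NormedAddCommGroup E]
    [NormedSpace ℝ E] [NormedAddCommGroup F] [NormedSpace ℝ F] {f : E → F} {s : Set E} {K : ℝ≥0}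
    (hs : Convex ℝ s) (hf : ∀ z ∈ s, ContDiffAt ℝ 2 f z)
    (hK : ∀ z ∈ s, ‖iteratedFDeriv ℝ 2 f z‖ ≤ K) : LipschitzOnWith K (fderiv ℝ f) s := by
  refine hs.lipschitzOnWith_of_nnnorm_fderiv_le (𝕜 := ℝ) (fun z hz => ?_) fun z hz => ?_
  · have hfderiv : ContDiffAt ℝ 1 (fderiv ℝ f) z := (hf z hz).fderiv_right (by norm_num)
    exact hfderiv.differentiableAt one_ne_zero
  · rw [← NNReal.coe_le_coe, coe_nnnorm, ← norm_iteratedFDeriv_one, norm_iteratedFDeriv_fderiv]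
    exact hK z hz

variable {F : Type*} [NormedAddCommGroup F] [NormedSpace ℝ F] {u : ℝ → ℝ → F} {x t : ℝ}

theorem hasDerivAt_fst_of_differentiableAt_uncurry (h : DifferentiableAt ℝ (uncurry u) (x, t)) :
    HasDerivAt (fun y => u y t) (fderiv ℝ (uncurry u) (x, t) (1, 0)) x :=
  h.hasFDerivAt.comp_hasDerivAt (f := fun y => (y, t)) x
    ((hasDerivAt_id x).prodMk (hasDerivAt_const x t))

theorem hasDerivAt_snd_of_differentiableAt_uncurry (h : DifferentiableAt ℝ (uncurry u) (x, t)) :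
    HasDerivAt (fun s => u x s) (fderiv ℝ (uncurry u) (x, t) (0, 1)) t :=
  h.hasFDerivAt.comp_hasDerivAt (f := fun s => (x, s)) t
    ((hasDerivAt_const t x).prodMk (hasDerivAt_id t))

theorem hasDerivAt_deriv_swap {D : F} (hu : ContDiffAt ℝ 2 (uncurry u) (x, t))
    (hD : HasDerivAt (fun y => deriv (fun s => u y s) t) D x) :
    HasDerivAt (fun s => deriv (fun y => u y s) x) D t := by
  have hdiff : ∀ᶠ z in 𝓝 (x, t), DifferentiableAt ℝ (uncurry u) z :=
    (hu.eventually (by simp)).mono fun z hz => hz.differentiableAt two_ne_zero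
  have hsecond : DifferentiableAt ℝ (fderiv ℝ (uncurry u)) (x, t) :=
    (hu.fderiv_right (m := 1) (by norm_num)).differentiableAt one_ne_zero
  have hfst : (fun s => deriv (fun y => u y s) x) =ᶠ[𝓝 t]
      fun s => fderiv ℝ (uncurry u) (x, s) (1, 0) := by
    filter_upwards [(Continuous.prodMk_right x).tendsto t |>.eventually hdiff] with s hs
    exact (hasDerivAt_fst_of_differentiableAt_uncurry hs).deriv
  have hsnd : (fun y => deriv (fun s => u y s) t) =ᶠ[𝓝 x]
      fun y => fderiv ℝ (uncurry u) (y, t) (0, 1) := by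
    filter_upwards [(Continuous.prodMk_left t).tendsto x |>.eventually hdiff] with y hy
    exact (hasDerivAt_snd_of_differentiableAt_uncurry hy).deriv
  have hmixed_fst : HasDerivAt (fun s => deriv (fun y => u y s) x)
      (fderiv ℝ (fderiv ℝ (uncurry u)) (x, t) (0, 1) (1, 0)) t := by
    refine HasDerivAt.congr_of_eventuallyEq ?_ hfst
    simpa using (hasDerivAt_snd_of_differentiableAt_uncurry
      (u := curry (fderiv ℝ (uncurry u))) hsecond).clm_apply (hasDerivAt_const t ((1 : ℝ), (0 : ℝ)))
  have hmixed_snd : HasDerivAt (fun y => deriv (fun s => u y s) t)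
      (fderiv ℝ (fderiv ℝ (uncurry u)) (x, t) (1, 0) (0, 1)) x := by
    refine HasDerivAt.congr_of_eventuallyEq ?_ hsnd
    simpa using (hasDerivAt_fst_of_differentiableAt_uncurry
      (u := curry (fderiv ℝ (uncurry u))) hsecond).clm_apply (hasDerivAt_const x ((0 : ℝ), (1 : ℝ)))
  have hsymm : IsSymmSndFDerivAt ℝ (uncurry u) (x, t) :=
    hu.isSymmSndFDerivAt minSmoothness_of_isRCLikeNormedField.le
  rwa [hD.unique hmixed_snd, hsymm]

end PartialDerivatives

section NonlocalDiffusion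

/-- The nonlocal diffusion operator `ℒf = J * f - f`. -/
noncomputable def nonlocalDiffusion (J f : ℝ → ℝ) (x : ℝ) : ℝ :=
  (∫ z, J z * f (x - z)) - f x

variable {J f : ℝ → ℝ} {x : ℝ}

theorem nonlocalDiffusion_nonpos_of_forall_le (hJ : Integrable J) (hJ0 : ∀ z, 0 ≤ J z)
    (hJ1 : ∫ z, J z ≤ 1) (hf : ∀ y, 0 ≤ f y) (hmax : ∀ y, f y ≤ f x) :
    nonlocalDiffusion J f x ≤ 0 := by
  refine sub_nonpos.2 ?_
  calc ∫ z, J z * f (x - z) ≤ ∫ z, J z * f x :=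
        integral_mono_of_nonneg (ae_of_all _ fun z => mul_nonneg (hJ0 z) (hf _))
          (hJ.mul_const _) (ae_of_all _ fun z => mul_le_mul_of_nonneg_left (hmax _) (hJ0 z))
    _ = (∫ z, J z) * f x := integral_mul_const _ _
    _ ≤ f x := mul_le_of_le_one_left (hf x) hJ1

theorem hasDerivAt_nonlocalDiffusion {M M' : ℝ} (hJ : Integrable J) (hf : Differentiable ℝ f)
    (hM : ∀ y, |f y| ≤ M) (hM' : ∀ y, |deriv f y| ≤ M') :
    HasDerivAt (nonlocalDiffusion J f) (nonlocalDiffusion J (deriv f) x) x := by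
  have hmeas : ∀ y, AEStronglyMeasurable (fun z => f (y - z)) := fun y =>
    (hf.continuous.comp (continuous_sub_left y)).aestronglyMeasurable
  have hconv : HasDerivAt (fun y => ∫ z, J z * f (y - z)) (∫ z, J z * deriv f (x - z)) x := by
    refine (hasDerivAt_integral_of_dominated_loc_of_deriv_le
      (F' := fun y z => J z * deriv f (y - z)) (bound := fun z => |J z| * M')
      univ_mem ?_ ?_ ?_ ?_ ?_ ?_).2
    · exact .of_forall fun y => hJ.aestronglyMeasurable.mul (hmeas y)
    · exact hJ.mul_bdd (hmeas x) (ae_of_all _ fun z => hM _)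
    · exact hJ.aestronglyMeasurable.mul
        ((measurable_deriv f).comp (measurable_const_sub x)).aestronglyMeasurable
    · refine ae_of_all _ fun z y _ => ?_
      rw [norm_mul, Real.norm_eq_abs, Real.norm_eq_abs]
      exact mul_le_mul_of_nonneg_left (hM' _) (abs_nonneg _)
    · exact hJ.abs.mul_const M'
    · exact ae_of_all _ fun z y _ => ((hf (y - z)).hasDerivAt.comp_sub_const y z).const_mul (J z)
  exact hconv.sub (hf x).hasDerivAt

/-- The right-hand side `ε f'' + ℒf - f f'` of the nonlocal Burgers equation. -/
noncomputable def nonlocalBurgers (ε : ℝ) (J f : ℝ → ℝ) (x : ℝ) : ℝ :=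
  ε * iteratedDeriv 2 f x + nonlocalDiffusion J f x - f x * deriv f x

theorem exists_hasDerivAt_nonlocalBurgers_le_neg_sq {ε M : ℝ} (hε : 0 ≤ ε) (hJ : Integrable J)
    (hJ0 : ∀ z, 0 ≤ J z) (hJ1 : ∫ z, J z ≤ 1) (hf : ContDiff ℝ 3 f) (hM : ∀ y, |f y| ≤ M)
    (hf0 : ∀ y, 0 ≤ deriv f y) (hmax : ∀ y, deriv f y ≤ deriv f x) :
    ∃ D ≤ -(deriv f x) ^ 2, HasDerivAt (nonlocalBurgers ε J f) D x := by
  have hf1 : Differentiable ℝ f := hf.differentiable (by norm_num)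
  have hf2 : Differentiable ℝ (deriv f) :=
    (hf.iterate_deriv' 2 1).differentiable (by norm_num)
  have hf3 : Differentiable ℝ (deriv (deriv f)) :=
    (hf.iterate_deriv' 1 2).differentiable (by norm_num)
  have hlocmax : IsLocalMax (deriv f) x := .of_forall hmax
  have hsecond : deriv (deriv f) x = 0 := hlocmax.deriv_eq_zero
  have hthird : deriv (deriv (deriv f)) x ≤ 0 :=
    deriv_deriv_nonpos_of_isLocalMax hlocmax (hf2 x).continuousAt
  have hdiffusion : nonlocalDiffusion J (deriv f) x ≤ 0 :=
    nonlocalDiffusion_nonpos_of_forall_le hJ hJ0 hJ1 hf0 hmax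
  have hderiv : HasDerivAt (nonlocalBurgers ε J f)
      (ε * deriv (deriv (deriv f)) x + nonlocalDiffusion J (deriv f) x
        - (deriv f x * deriv f x + f x * deriv (deriv f) x)) x := by
    have hrhs : nonlocalBurgers ε J f =
        fun y => ε * deriv (deriv f) y + nonlocalDiffusion J f y - f y * deriv f y := by
      funext y
      rw [nonlocalBurgers, iteratedDeriv_succ, iteratedDeriv_one]
    rw [hrhs]
    exact (((hf3 x).hasDerivAt.const_mul ε).add (hasDerivAt_nonlocalDiffusion hJ hf1 hM
      fun y => (abs_of_nonneg (hf0 y)).trans_le (hmax y))).sub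
        ((hf1 x).hasDerivAt.mul (hf2 x).hasDerivAt)
  refine ⟨_, ?_, hderiv⟩
  rw [hsecond]
  linarith [mul_nonpos_of_nonneg_of_nonpos hε hthird]

end NonlocalDiffusion

/-- Classical solutions on `ℝ × (0, ∞)` of the nonlocal Burgers equation
`u_t = ε u_xx + ℒu - u u_x` that are bounded and nondecreasing in space at each positive time and
have bounded second derivatives away from the initial time. As in `u x t`, space comes first. -/
structure IsMonotoneSolution (ε : ℝ) (J : ℝ → ℝ) (u : ℝ → ℝ → ℝ) : Prop where
  contDiffAt : ∀ x t, 0 < t → ContDiffAt ℝ 3 (uncurry u) (x, t)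
  hasDerivAt_time : ∀ x t, 0 < t →
    HasDerivAt (fun s => u x s) (nonlocalBurgers ε J (fun y => u y t) x) t
  deriv_nonneg : ∀ x, ∀ t > 0, 0 ≤ deriv (fun y => u y t) x
  bounded : ∀ t > 0, ∃ M, ∀ x, |u x t| ≤ M
  bounded_iteratedFDeriv_two : ∀ t₀ > 0, ∃ M, ∀ x t, t₀ < t →
    ‖iteratedFDeriv ℝ 2 (uncurry u) (x, t)‖ ≤ M

namespace IsMonotoneSolution

variable {ε : ℝ} {J : ℝ → ℝ} {u : ℝ → ℝ → ℝ} {t : ℝ}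

theorem contDiff_slice (hu : IsMonotoneSolution ε J u) (ht : 0 < t) :
    ContDiff ℝ 3 (fun x => u x t) :=
  contDiff_iff_contDiffAt.2 fun x =>
    (hu.contDiffAt x t ht).comp x (contDiffAt_id.prodMk contDiffAt_const)

theorem exists_lipschitzOnWith_deriv (hu : IsMonotoneSolution ε J u) {t₀ : ℝ} (ht₀ : 0 < t₀) :
    ∃ K, LipschitzOnWith K (fun z : ℝ × ℝ => deriv (fun y => u y z.2) z.1) (univ ×ˢ Ioi t₀) := by
  obtain ⟨M, hM⟩ := hu.bounded_iteratedFDeriv_two t₀ ht₀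
  have hpos : ∀ z ∈ (univ ×ˢ Ioi t₀ : Set (ℝ × ℝ)), 0 < z.2 := fun z hz => ht₀.trans hz.2
  have hfderiv : LipschitzOnWith M.toNNReal (fderiv ℝ (uncurry u)) (univ ×ˢ Ioi t₀) :=
    lipschitzOnWith_fderiv_of_norm_iteratedFDeriv_two_le (convex_univ.prod (convex_Ioi t₀))
      (fun z hz => (hu.contDiffAt _ _ (hpos z hz)).of_le (by norm_num))
      fun z hz => (hM _ _ hz.2).trans (Real.le_coe_toNNReal M)
  have heq : EqOn (fun z : ℝ × ℝ => deriv (fun y => u y z.2) z.1)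
      (fun z => fderiv ℝ (uncurry u) z (1, 0)) (univ ×ˢ Ioi t₀) := fun z hz =>
    (hasDerivAt_fst_of_differentiableAt_uncurry
      ((hu.contDiffAt _ _ (hpos z hz)).differentiableAt (by norm_num))).deriv
  have happly :=
    (ContinuousLinearMap.apply ℝ ℝ ((1 : ℝ), (0 : ℝ))).lipschitz.comp_lipschitzOnWith hfderiv
  refine ⟨‖ContinuousLinearMap.apply ℝ ℝ ((1 : ℝ), (0 : ℝ))‖₊ * M.toNNReal, fun z hz z' hz' => ?_⟩
  rw [heq hz, heq hz']
  exact happly hz hz'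

theorem exists_forall_deriv_le (hu : IsMonotoneSolution ε J u) (ht : 0 < t) :
    ∃ x, ∀ y, deriv (fun y => u y t) y ≤ deriv (fun y => u y t) x := by
  obtain ⟨M, hM⟩ := hu.bounded t ht
  obtain ⟨K, hK⟩ := hu.exists_lipschitzOnWith_deriv (half_pos ht)
  have hslice : LipschitzWith K (deriv fun y => u y t) := LipschitzWith.of_dist_le_mul fun x y => by
    simpa [Prod.dist_eq] using
      hK.dist_le_mul (x, t) ⟨mem_univ x, half_lt_self ht⟩ (y, t) ⟨mem_univ y, half_lt_self ht⟩
  exact exists_forall_deriv_le_of_bounded ((hu.contDiff_slice ht).differentiable (by norm_num))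
    (fun x => hu.deriv_nonneg x t ht) hM hslice.uniformContinuous

theorem exists_hasDerivAt_deriv_le_neg_sq (hu : IsMonotoneSolution ε J u) (hε : 0 ≤ ε)
    (hJ : Integrable J) (hJ0 : ∀ z, 0 ≤ J z) (hJ1 : ∫ z, J z ≤ 1) (ht : 0 < t) {x : ℝ}
    (hmax : ∀ y, deriv (fun y => u y t) y ≤ deriv (fun y => u y t) x) :
    ∃ D ≤ -(deriv (fun y => u y t) x) ^ 2, HasDerivAt (fun s => deriv (fun y => u y s) x) D t := by
  obtain ⟨M, hM⟩ := hu.bounded t ht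
  obtain ⟨D, hD, hderiv⟩ := exists_hasDerivAt_nonlocalBurgers_le_neg_sq hε hJ hJ0 hJ1
    (hu.contDiff_slice ht) hM (fun y => hu.deriv_nonneg y t ht) hmax
  have htime : (fun y => deriv (fun s => u y s) t) = nonlocalBurgers ε J (fun y => u y t) :=
    funext fun y => (hu.hasDerivAt_time y t ht).deriv
  exact ⟨D, hD, hasDerivAt_deriv_swap ((hu.contDiffAt x t ht).of_le (by norm_num))
    (htime.symm ▸ hderiv)⟩

theorem sub_mul_deriv_le_one (hu : IsMonotoneSolution ε J u) (hε : 0 ≤ ε) (hJ : Integrable J)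
    (hJ0 : ∀ z, 0 ≤ J z) (hJ1 : ∫ z, J z ≤ 1) {a b : ℝ} (ha : 0 < a) (hab : a ≤ b) (x : ℝ) :
    (b - a) * deriv (fun y => u y b) x ≤ 1 := by
  obtain ⟨K, hK⟩ := hu.exists_lipschitzOnWith_deriv (half_pos ha)
  refine sub_mul_le_one_of_hasDerivAt_le_neg_sq (w := fun x t => deriv (fun y => u y t) x) (K := K)
    hab (fun x => LipschitzOnWith.of_dist_le_mul fun s hs r hr => ?_)
    (fun t ht => hu.exists_forall_deriv_le (ha.trans_le ht.1))
    (fun t ht x => hu.exists_hasDerivAt_deriv_le_neg_sq hε hJ hJ0 hJ1 (ha.trans ht.1)) x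
  simpa [Prod.dist_eq] using
    hK.dist_le_mul (x, s) ⟨mem_univ x, (half_lt_self ha).trans_le hs.1⟩
      (x, r) ⟨mem_univ x, (half_lt_self ha).trans_le hr.1⟩

theorem deriv_le_inv (hu : IsMonotoneSolution ε J u) (hε : 0 ≤ ε) (hJ : Integrable J)
    (hJ0 : ∀ z, 0 ≤ J z) (hJ1 : ∫ z, J z ≤ 1) (ht : 0 < t) (x : ℝ) :
    deriv (fun y => u y t) x ≤ t⁻¹ := by
  have hlim : Tendsto (fun a => (t - a) * deriv (fun y => u y t) x) (𝓝[>] 0)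
      (𝓝 ((t - 0) * deriv (fun y => u y t) x)) :=
    (Continuous.tendsto (by fun_prop) 0).mono_left nhdsWithin_le_nhds
  have hle : (t - 0) * deriv (fun y => u y t) x ≤ 1 := le_of_tendsto hlim <| by
    filter_upwards [Ioo_mem_nhdsGT ht] with a ha
    exact hu.sub_mul_deriv_le_one hε hJ hJ0 hJ1 ha.1 ha.2.le x
  rwa [sub_zero, mul_comm, ← le_div_iff₀ ht, one_div] at hle

end IsMonotoneSolution

section Interpolation

variable {α : Type*} [MeasurableSpace α] {μ : Measure α} {p : ℝ≥0∞}

theorem eLpNorm_le_eLpNorm_top_rpow_mul_eLpNorm_one_rpow {E : Type*} [NormedAddCommGroup E]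
    {f : α → E} (hf : AEStronglyMeasurable f μ) (hp : 1 ≤ p) :
    eLpNorm f p μ ≤ eLpNorm f ∞ μ ^ (1 - p⁻¹.toReal) * eLpNorm f 1 μ ^ p⁻¹.toReal := by
  rcases eq_or_ne p ∞ with rfl | hp_top
  · simp
  have hp0 : p ≠ 0 := (one_pos.trans_le hp).ne'
  have hq : 1 ≤ p.toReal := by simpa using ENNReal.toReal_mono hp_top hp
  have hq0 : 0 < p.toReal := one_pos.trans_le hq
  have hpointwise : ∀ᵐ x ∂μ, ‖f x‖ₑ ^ p.toReal ≤ eLpNorm f ∞ μ ^ (p.toReal - 1) * ‖f x‖ₑ := by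
    filter_upwards [enorm_ae_le_eLpNormEssSup f μ] with x hx
    calc ‖f x‖ₑ ^ p.toReal = ‖f x‖ₑ ^ (p.toReal - 1) * ‖f x‖ₑ := by
          conv_rhs => rw [← ENNReal.rpow_one ‖f x‖ₑ, ← ENNReal.rpow_mul, one_mul]
          rw [← ENNReal.rpow_add_of_nonneg _ _ (sub_nonneg.2 hq) zero_le_one, sub_add_cancel]
      _ ≤ eLpNorm f ∞ μ ^ (p.toReal - 1) * ‖f x‖ₑ := by
          rw [eLpNorm_exponent_top]
          gcongr
  have hintegral : ∫⁻ x, ‖f x‖ₑ ^ p.toReal ∂μ ≤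
      eLpNorm f ∞ μ ^ (p.toReal - 1) * eLpNorm f 1 μ := by
    rw [eLpNorm_one_eq_lintegral_enorm, ← lintegral_const_mul'' _ hf.enorm]
    exact lintegral_mono_ae hpointwise
  rw [eLpNorm_eq_lintegral_rpow_enorm_toReal hp0 hp_top, ENNReal.toReal_inv, one_div]
  refine (ENNReal.rpow_le_rpow hintegral (by positivity)).trans_eq ?_
  rw [ENNReal.mul_rpow_of_nonneg _ _ (by positivity), ← ENNReal.rpow_mul, sub_mul,
    mul_inv_cancel₀ hq0.ne', one_mul]

theorem eLpNorm_le_ofReal_rpow_mul_integral_rpow {g : α → ℝ} {C : ℝ} (hg : Integrable g μ)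
    (hg0 : ∀ x, 0 ≤ g x) (hC0 : 0 ≤ C) (hC : ∀ x, g x ≤ C) (hp : 1 ≤ p) :
    eLpNorm g p μ ≤ ENNReal.ofReal (C ^ (1 - p⁻¹.toReal) * (∫ x, g x ∂μ) ^ p⁻¹.toReal) := by
  have hexp : 0 ≤ 1 - p⁻¹.toReal :=
    sub_nonneg.2 (ENNReal.toReal_le_of_le_ofReal zero_le_one (by simpa using hp))
  have htop : eLpNorm g ∞ μ ≤ ENNReal.ofReal C := by
    rw [eLpNorm_exponent_top]
    refine eLpNormEssSup_le_of_ae_enorm_bound (ae_of_all _ fun x => ?_)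
    rw [Real.enorm_of_nonneg (hg0 x)]
    exact ENNReal.ofReal_le_ofReal (hC x)
  have hone : eLpNorm g 1 μ = ENNReal.ofReal (∫ x, g x ∂μ) := by
    rw [eLpNorm_one_eq_lintegral_enorm, ← ofReal_integral_norm_eq_lintegral_enorm hg]
    simp only [Real.norm_of_nonneg (hg0 _)]
  calc eLpNorm g p μ ≤ eLpNorm g ∞ μ ^ (1 - p⁻¹.toReal) * eLpNorm g 1 μ ^ p⁻¹.toReal :=
        eLpNorm_le_eLpNorm_top_rpow_mul_eLpNorm_one_rpow hg.aestronglyMeasurable hp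
    _ ≤ ENNReal.ofReal C ^ (1 - p⁻¹.toReal) * ENNReal.ofReal (∫ x, g x ∂μ) ^ p⁻¹.toReal := by
        rw [hone]; gcongr
    _ = ENNReal.ofReal (C ^ (1 - p⁻¹.toReal) * (∫ x, g x ∂μ) ^ p⁻¹.toReal) := by
        rw [ENNReal.ofReal_mul (by positivity), ENNReal.ofReal_rpow_of_nonneg hC0 hexp,
          ENNReal.ofReal_rpow_of_nonneg (integral_nonneg hg0) ENNReal.toReal_nonneg]

end Interpolation

theorem stmt13_general {ε : ℝ} (hε : 0 ≤ ε) {J : ℝ → ℝ} (hJ : Integrable J) (hJ0 : ∀ z, 0 ≤ J z)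
    (hJ1 : ∫ z, J z ≤ 1) {u : ℝ → ℝ → ℝ} (hu : IsMonotoneSolution ε J u) {t : ℝ} (ht : 0 < t)
    (hux : Integrable fun x => deriv (fun y => u y t) x) {A : ℝ}
    (hA : ∫ x, deriv (fun y => u y t) x ≤ A) {p : ℝ≥0∞} (hp : 1 ≤ p) :
    eLpNorm (fun x => deriv (fun y => u y t) x) p volume
      ≤ ENNReal.ofReal (t ^ (-1 + p⁻¹.toReal) * A ^ p⁻¹.toReal) := by
  have hux0 : ∀ x, 0 ≤ deriv (fun y => u y t) x := fun x => hu.deriv_nonneg x t ht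
  refine (eLpNorm_le_ofReal_rpow_mul_integral_rpow hux hux0 (inv_nonneg.2 ht.le)
    (hu.deriv_le_inv hε hJ hJ0 hJ1 ht) hp).trans (ENNReal.ofReal_le_ofReal ?_)
  rw [Real.inv_rpow ht.le, ← Real.rpow_neg ht.le, neg_sub, sub_eq_neg_add]
  gcongr
  exact integral_nonneg hux0

/-- `L^p` decay of the spatial derivative: for a bounded, smooth classical
solution `u` of `u_t = ε u_xx + J*u - u - u u_x` with nondecreasing step-like initial datum,
whose spatial derivative is nonnegative, integrable, and of conserved integral
`∫ u_x(·,t) = ∫ u₀'`, one has `‖u_x(·,t)‖_p ≤ t^{-1+1/p} ‖u₀'‖₁^{1/p}` for all `p ∈ [1,∞]`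
and `t > 0`. -/
theorem stmt13 (ε : ℝ) (hε : 0 < ε)
    (J : ℝ → ℝ) (hJint : Integrable J) (hJ2 : Integrable fun x => x ^ 2 * J x)
    (hJ1 : (∫ x, J x) = 1) (hJeven : ∀ x, J (-x) = J x) (hJpos : ∀ x, 0 ≤ J x)
    (um up : ℝ) (hum : um < up)
    (u₀ : ℝ → ℝ)
    (hm : IntegrableOn (fun x => u₀ x - um) (Set.Iio 0))
    (hp : IntegrableOn (fun x => u₀ x - up) (Set.Ioi 0))
    (v : ℝ → ℝ) (hv : Integrable v) (hv0 : ∀ᵐ x ∂(volume : Measure ℝ), 0 ≤ v x)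
    (hu₀v : ∀ x, u₀ x = u₀ 0 + ∫ s in (0 : ℝ)..x, v s)
    (u : ℝ → ℝ → ℝ)
    (hub : ∃ M, ∀ x t, 0 < t → |u x t| ≤ M)
    (hsmooth : ∀ x t, 0 < t → ContDiffAt ℝ (⊤ : ℕ∞) (Function.uncurry u) (x, t))
    (hder : ∀ t₀ > (0 : ℝ), ∀ n : ℕ, ∃ M, ∀ x t, t₀ < t →
      ‖iteratedFDeriv ℝ n (Function.uncurry u) (x, t)‖ ≤ M)
    (heq : ∀ x t, 0 < t →
      HasDerivAt (fun s => u x s)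
        (ε * iteratedDeriv 2 (fun y => u y t) x + ((∫ z, J z * u (x - z) t) - u x t)
          - u x t * deriv (fun y => u y t) x) t)
    (hux0 : ∀ x : ℝ, ∀ t > (0 : ℝ), 0 ≤ deriv (fun y => u y t) x)
    (hux1 : ∀ t > (0 : ℝ), Integrable fun x => deriv (fun y => u y t) x)
    (hcons : ∀ t > (0 : ℝ), (∫ x, deriv (fun y => u y t) x) = ∫ x, v x) :
    ∀ p : ℝ≥0∞, 1 ≤ p → ∀ t > (0 : ℝ),
      eLpNorm (fun x => deriv (fun y => u y t) x) p volume
        ≤ ENNReal.ofReal (t ^ (-1 + p⁻¹.toReal) * (∫ x, |v x|) ^ p⁻¹.toReal) := by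
  have hu : IsMonotoneSolution ε J u :=
    { contDiffAt := fun x t ht => contDiffAt_infty.1 (hsmooth x t ht) 3
      hasDerivAt_time := heq
      deriv_nonneg := hux0
      bounded := fun t ht => hub.imp fun M hM x => hM x t ht
      bounded_iteratedFDeriv_two := fun t₀ ht₀ => hder t₀ ht₀ 2 }
  have hv_le : ∫ x, v x ≤ ∫ x, |v x| := integral_mono hv hv.abs fun x => le_abs_self (v x)
  exact fun p hp1 t ht =>
    stmt13_general hε.le hJint hJpos hJ1.le hu ht (hux1 t ht) ((hcons t ht).trans_le hv_le) hp1
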